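/- Let r > 0, a > b > 0, set α = √(2/r)·(√a − √b), β = √(r/2)·(√a + √b), k = (√a − √b)/(√a + √b), let sn, cn, dn : ℝ → ℝ be differentiable functions satisfying sn' = cn·dn, cn' = −sn·dn, dn' = −k²·sn·cn with sn(0) = 0, cn(0) = 1, dn(0) = 1, and define x(t) = a·((dn(βt) + k·cn(βt))/(1 + k))² and y(t) = α·sn(βt). Assume the two conditions √(r/2)·(√a + √b) = 2·K(k) and (√a + √b)·√(2/r)·E(k) − √(a·b) = 1. Then for all t ∈ ℝ: x(t + 2) = x(t), y(t + 2) = y(t), x(t)·x(t − 1) = a·b, and y(t) = ∫_{s ∈ (t−1, t)} x(s) ds − 1. -/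

import Mathlib

/-!
Let `am` be the primitive of `dn` vanishing at `0`. The pairs `(sn, cn)` and `(sin am, cos am)` solve
the same linear system, so they coincide; with `dn² = 1 - k² sn²` and `dn > 0` this gives
`am' = √(1 - k² sin² am)`. Hence the incomplete integral `F` of the first kind inverts `am`, and
`F (φ + π) = F φ + 2 K` (`integral_add_pi`) together with injectivity of `F` yields
`am (u + 2K) = am u + π`. So `sn` and `cn` change sign under `u ↦ u + 2K`, `dn` is invariant, and
the primitive of `dn²` obtained by composing the incomplete integral of the second kind with `am`
increases by `2E` (`jacobi_shift`).

Since `β = 2K`, the shift `t ↦ t - 1` replaces `dn + k cn` by `dn - k cn`, and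
`(dn + k cn)(dn - k cn) = 1 - k²` gives `x(t) x(t-1) = ab`. Finally
`(dn + k cn)² = 2 dn² + 2k cn dn - (1 - k²)` has an explicit primitive in terms of that of `dn²`;
the resulting primitive of `x` increases by `y(t) + 1` over `[t - 1, t]` by the second condition.
-/

/-- The complete elliptic integral of the first kind. -/
noncomputable def ellipticK (k : ℝ) : ℝ :=
  ∫ θ in (0:ℝ)..(Real.pi / 2), 1 / Real.sqrt (1 - k ^ 2 * Real.sin θ ^ 2)

/-- The complete elliptic integral of the second kind. -/
noncomputable def ellipticE (k : ℝ) : ℝ :=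
  ∫ θ in (0:ℝ)..(Real.pi / 2), Real.sqrt (1 - k ^ 2 * Real.sin θ ^ 2)

/-- A primitive of an even `π`-periodic function grows over each period by twice its
increment over a quarter turn. -/
lemma integral_add_pi (g : ℝ → ℝ) (hg : Continuous g)
    (hper : ∀ θ, g (θ + Real.pi) = g θ) (heven : ∀ θ, g (-θ) = g θ) (φ : ℝ) :
    ∫ θ in (0:ℝ)..(φ + Real.pi), g θ
      = (∫ θ in (0:ℝ)..φ, g θ) + 2 * ∫ θ in (0:ℝ)..(Real.pi / 2), g θ := by
  have hi : ∀ p q : ℝ, IntervalIntegrable g MeasureTheory.volume p q :=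
    fun p q => hg.intervalIntegrable p q
  have h1 : ∫ θ in φ..(φ + Real.pi), g θ = ∫ θ in (0:ℝ)..(0 + Real.pi), g θ :=
    Function.Periodic.intervalIntegral_add_eq (f := g) (T := Real.pi) hper φ 0
  have h2 : ∫ θ in (Real.pi / 2)..Real.pi, g θ = ∫ θ in (0:ℝ)..(Real.pi / 2), g θ := by
    have h := intervalIntegral.integral_comp_sub_left (a := 0) (b := Real.pi / 2) g Real.pi
    have e : ∀ θ, g (Real.pi - θ) = g θ := fun θ => by
      rw [show Real.pi - θ = -θ + Real.pi by ring, hper, heven]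
    simp only [e] at h
    rw [h]
    congr 1 <;> ring
  have h3 := intervalIntegral.integral_add_adjacent_intervals (hi 0 φ) (hi φ (φ + Real.pi))
  have h4 := intervalIntegral.integral_add_adjacent_intervals (hi 0 (Real.pi / 2))
    (hi (Real.pi / 2) Real.pi)
  rw [zero_add] at h1
  linarith

lemma eq_of_hasDerivAt_zero (f : ℝ → ℝ) (hf : ∀ t, HasDerivAt f 0 t) (u : ℝ) : f u = f 0 :=
  is_const_of_deriv_eq_zero (fun t => (hf t).differentiableAt) (fun t => (hf t).deriv) u 0

/-- Behaviour of the Jacobi functions under the half-period shift `u ↦ u + 2K`; the function `A` is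
the incomplete integral of the second kind evaluated at the amplitude. -/
lemma jacobi_shift (k : ℝ) (hk : k ^ 2 < 1) (sn cn dn : ℝ → ℝ)
    (hsn : ∀ t : ℝ, HasDerivAt sn (cn t * dn t) t)
    (hcn : ∀ t : ℝ, HasDerivAt cn (-(sn t * dn t)) t)
    (hdn : ∀ t : ℝ, HasDerivAt dn (-(k ^ 2 * sn t * cn t)) t)
    (hsn0 : sn 0 = 0) (hcn0 : cn 0 = 1) (hdn0 : dn 0 = 1) :
    (∀ u, sn u ^ 2 + cn u ^ 2 = 1) ∧ (∀ u, dn u ^ 2 = 1 - k ^ 2 * sn u ^ 2) ∧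
    (∀ u, sn (u + 2 * ellipticK k) = -sn u) ∧ (∀ u, cn (u + 2 * ellipticK k) = -cn u) ∧
    (∀ u, dn (u + 2 * ellipticK k) = dn u) ∧
    ∃ A : ℝ → ℝ, (∀ u, HasDerivAt A (dn u ^ 2) u) ∧
      ∀ u, A (u + 2 * ellipticK k) = A u + 2 * ellipticE k := by
  have hsc : ∀ u, sn u ^ 2 + cn u ^ 2 = 1 := fun u => by
    have := eq_of_hasDerivAt_zero (fun u => sn u ^ 2 + cn u ^ 2) (fun t => by
      refine (((hsn t).pow 2).add ((hcn t).pow 2)).congr_deriv ?_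
      push_cast; ring) u
    simpa [hsn0, hcn0] using this
  have hds : ∀ u, dn u ^ 2 = 1 - k ^ 2 * sn u ^ 2 := fun u => by
    have := eq_of_hasDerivAt_zero (fun u => dn u ^ 2 + k ^ 2 * sn u ^ 2) (fun t => by
      refine (((hdn t).pow 2).add (((hsn t).pow 2).const_mul (k ^ 2))).congr_deriv ?_
      push_cast; ring) u
    simp only [hsn0, hdn0] at this
    linarith
  have hdc : Continuous dn := continuous_iff_continuousAt.2 fun t => (hdn t).continuousAt
  have hdne : ∀ u, dn u ≠ 0 := fun u h => by
    have h1 := hds u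
    have h2 := hsc u
    rw [h] at h1
    nlinarith [sq_nonneg (cn u), sq_nonneg k]
  have hdpos : ∀ u, 0 < dn u := fun u => by
    by_contra hu
    have h0 : (0:ℝ) ∈ Set.range dn :=
      mem_range_of_exists_le_of_exists_ge hdc ⟨u, not_lt.1 hu⟩ ⟨0, by rw [hdn0]; norm_num⟩
    obtain ⟨v, hv⟩ := h0
    exact hdne v hv
  -- The amplitude function.
  set am : ℝ → ℝ := fun u => ∫ s in (0:ℝ)..u, dn s with ham
  have hamd : ∀ u, HasDerivAt am (dn u) u := fun u =>
    intervalIntegral.integral_hasDerivAt_right (hdc.intervalIntegrable _ _)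
      hdc.aestronglyMeasurable.stronglyMeasurableAtFilter hdc.continuousAt
  have ham0 : am 0 = 0 := by simp [ham]
  have hdist : ∀ u, (sn u - Real.sin (am u)) ^ 2 + (cn u - Real.cos (am u)) ^ 2 = 0 := fun u => by
    have := eq_of_hasDerivAt_zero
      (fun u => (sn u - Real.sin (am u)) ^ 2 + (cn u - Real.cos (am u)) ^ 2) (fun t => by
      refine ((((hsn t).sub (hamd t).sin).pow 2).add
        (((hcn t).sub (hamd t).cos).pow 2)).congr_deriv ?_
      simp only [Pi.sub_apply]
      push_cast; ring) u
    simpa [hsn0, hcn0, ham0] using this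
  have hsin : ∀ u, sn u = Real.sin (am u) := fun u => by
    nlinarith [hdist u, sq_nonneg (sn u - Real.sin (am u)), sq_nonneg (cn u - Real.cos (am u))]
  have hcos : ∀ u, cn u = Real.cos (am u) := fun u => by
    nlinarith [hdist u, sq_nonneg (sn u - Real.sin (am u)), sq_nonneg (cn u - Real.cos (am u))]
  set w : ℝ → ℝ := fun θ => Real.sqrt (1 - k ^ 2 * Real.sin θ ^ 2) with hw
  have hwpos : ∀ θ, 0 < w θ := fun θ => by
    apply Real.sqrt_pos.2
    nlinarith [Real.sin_sq_le_one θ, sq_nonneg k, sq_nonneg (Real.sin θ)]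
  have hwc : Continuous w := by rw [hw]; fun_prop
  have hwic : Continuous fun θ => 1 / w θ :=
    continuous_const.div hwc fun θ => (hwpos θ).ne'
  have hwper : ∀ θ, w (θ + Real.pi) = w θ := fun θ => by simp [hw, Real.sin_add_pi]
  have hweven : ∀ θ, w (-θ) = w θ := fun θ => by simp [hw]
  have hdw : ∀ u, dn u = w (am u) := fun u => by
    simp only [hw]
    rw [← hsin, ← hds, Real.sqrt_sq (hdpos u).le]
  set F : ℝ → ℝ := fun φ => ∫ θ in (0:ℝ)..φ, 1 / w θ with hF
  set G : ℝ → ℝ := fun φ => ∫ θ in (0:ℝ)..φ, w θ with hG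
  have hFd : ∀ φ, HasDerivAt F (1 / w φ) φ := fun φ =>
    intervalIntegral.integral_hasDerivAt_right (hwic.intervalIntegrable _ _)
      hwic.aestronglyMeasurable.stronglyMeasurableAtFilter hwic.continuousAt
  have hGd : ∀ φ, HasDerivAt G (w φ) φ := fun φ =>
    intervalIntegral.integral_hasDerivAt_right (hwc.intervalIntegrable _ _)
      hwc.aestronglyMeasurable.stronglyMeasurableAtFilter hwc.continuousAt
  have hFmono : StrictMono F := strictMono_of_deriv_pos fun φ => by
    rw [(hFd φ).deriv]
    exact one_div_pos.2 (hwpos φ)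
  have hFpi : ∀ φ, F (φ + Real.pi) = F φ + 2 * ellipticK k := fun φ =>
    integral_add_pi _ hwic (fun θ => by rw [hwper]) (fun θ => by rw [hweven]) φ
  have hGpi : ∀ φ, G (φ + Real.pi) = G φ + 2 * ellipticE k := fun φ =>
    integral_add_pi _ hwc hwper hweven φ
  have hFam : ∀ u, F (am u) = u := fun u => by
    have := eq_of_hasDerivAt_zero (fun u => F (am u) - u) (fun t => by
      refine (((hFd (am t)).comp t (hamd t)).sub (hasDerivAt_id t)).congr_deriv ?_
      rw [hdw t, one_div, inv_mul_cancel₀ (hwpos _).ne', sub_self]) u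
    simp only [ham0] at this
    have hF0 : F 0 = 0 := by simp [hF]
    linarith
  have hshift : ∀ u, am (u + 2 * ellipticK k) = am u + Real.pi := fun u => by
    apply hFmono.injective
    rw [hFam, hFpi, hFam]
  refine ⟨hsc, hds, fun u => ?_, fun u => ?_, fun u => ?_, fun u => G (am u), fun u => ?_,
    fun u => ?_⟩
  · rw [hsin, hsin, hshift, Real.sin_add_pi]
  · rw [hcos, hcos, hshift, Real.cos_add_pi]
  · rw [hdw, hdw, hshift, hwper]
  · refine ((hGd (am u)).comp u (hamd u)).congr_deriv ?_
    rw [← hdw, sq]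
  · simp only [hshift, hGpi]

/-- Under the conditions `√(r/2)(√a + √b) = 2K(k)` and
`(√a + √b)√(2/r) E(k) − √(ab) = 1`, the solution `(x, y)` of the planar
system is 2-periodic, satisfies `x(t) x(t−1) = ab` and
`y(t) = ∫_{t−1}^{t} x(s) ds − 1`. -/
theorem periodic_solution_of_period_two_conditions (r a b : ℝ) (hr : r > 0)
    (hab : a > b) (hb : b > 0) (α β k : ℝ)
    (hα : α = Real.sqrt (2 / r) * (Real.sqrt a - Real.sqrt b))
    (hβ : β = Real.sqrt (r / 2) * (Real.sqrt a + Real.sqrt b))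
    (hk : k = (Real.sqrt a - Real.sqrt b) / (Real.sqrt a + Real.sqrt b))
    (sn cn dn : ℝ → ℝ)
    (hsn : ∀ t : ℝ, HasDerivAt sn (cn t * dn t) t)
    (hcn : ∀ t : ℝ, HasDerivAt cn (-(sn t * dn t)) t)
    (hdn : ∀ t : ℝ, HasDerivAt dn (-(k ^ 2 * sn t * cn t)) t)
    (hsn0 : sn 0 = 0) (hcn0 : cn 0 = 1) (hdn0 : dn 0 = 1)
    (x y : ℝ → ℝ)
    (hxdef : ∀ t : ℝ, x t = a * ((dn (β * t) + k * cn (β * t)) / (1 + k)) ^ 2)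
    (hydef : ∀ t : ℝ, y t = α * sn (β * t))
    (hcond1 : Real.sqrt (r / 2) * (Real.sqrt a + Real.sqrt b) = 2 * ellipticK k)
    (hcond2 : (Real.sqrt a + Real.sqrt b) * Real.sqrt (2 / r) * ellipticE k
        - Real.sqrt (a * b) = 1) :
    ∀ t : ℝ, x (t + 2) = x t ∧ y (t + 2) = y t ∧ x t * x (t - 1) = a * b ∧
      y t = (∫ s in (t - 1)..t, x s) - 1 := by
  obtain ⟨p, hp⟩ : ∃ p, p = Real.sqrt a := ⟨_, rfl⟩
  obtain ⟨q, hq⟩ : ∃ q, q = Real.sqrt b := ⟨_, rfl⟩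
  have ha : 0 < a := hb.trans hab
  have hq0 : 0 < q := hq ▸ Real.sqrt_pos.2 hb
  have hp0 : 0 < p := hp ▸ Real.sqrt_pos.2 ha
  have hpa : a = p ^ 2 := by rw [hp, Real.sq_sqrt ha.le]
  have hqb : b = q ^ 2 := by rw [hq, Real.sq_sqrt hb.le]
  have hpq : 0 < p + q := by positivity
  have hsab : Real.sqrt (a * b) = p * q := by rw [Real.sqrt_mul ha.le, ← hp, ← hq]
  rw [hsab] at hcond2
  rw [← hβ] at hcond1
  rw [← hp, ← hq] at hα hβ hk hcond2
  have hkpq : k * (p + q) = p - q := by rw [hk]; field_simp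
  have hk1 : 1 + k = 2 * p / (p + q) := by rw [hk]; field_simp; ring
  have hk2 : 1 - k = 2 * q / (p + q) := by rw [hk]; field_simp; ring
  have hk1p : 0 < 1 + k := by rw [hk1]; positivity
  have hk2p : 0 < 1 - k := by rw [hk2]; positivity
  have hksq : k ^ 2 < 1 := by nlinarith
  have hrr : Real.sqrt (2 / r) * Real.sqrt (r / 2) = 1 := by
    rw [← Real.sqrt_mul (by positivity), show 2 / r * (r / 2) = 1 by field_simp, Real.sqrt_one]
  have hβ0 : 0 < β := by rw [hβ]; positivity
  -- `α β = a - b = 4 k c` with `c = (p + q)² / 4`, the constant in front of `(dn + k cn)²`.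
  have hαβ : α * β = k * (p + q) ^ 2 := by
    rw [hα, hβ]
    linear_combination (p - q) * (p + q) * hrr - (p + q) * hkpq
  have hβs : β * Real.sqrt (2 / r) = p + q := by
    rw [hβ]; linear_combination (p + q) * hrr
  obtain ⟨hsc, hds, hs, hc, hd, A, hA, hAs⟩ :=
    jacobi_shift k hksq sn cn dn hsn hcn hdn hsn0 hcn0 hdn0
  rw [← hcond1] at hs hc hd hAs
  have hx : ∀ t, x t = (p + q) ^ 2 / 4 * (dn (β * t) + k * cn (β * t)) ^ 2 := fun t => by
    rw [hxdef, hk1, hpa]; field_simp; ring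
  have hstep : ∀ t, β * t = β * (t - 1) + β := fun t => by ring
  have hs1 : ∀ t, sn (β * t) = -sn (β * (t - 1)) := fun t => by rw [hstep t, hs]
  have hc1 : ∀ t, cn (β * t) = -cn (β * (t - 1)) := fun t => by rw [hstep t, hc]
  have hd1 : ∀ t, dn (β * t) = dn (β * (t - 1)) := fun t => by rw [hstep t, hd]
  have hA1 : ∀ t, A (β * t) = A (β * (t - 1)) + 2 * ellipticE k := fun t => by
    rw [hstep t, hAs]
  have hk4 : (p + q) ^ 2 * (1 - k ^ 2) = 4 * p * q := by
    linear_combination (-(k * (p + q)) - (p - q)) * hkpq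
  have hdc : ∀ u, dn u ^ 2 - k ^ 2 * cn u ^ 2 = 1 - k ^ 2 := fun u => by
    linear_combination hds u - k ^ 2 * hsc u
  intro t
  have e2 : β * (t + 2) = β * t + β + β := by ring
  refine ⟨?_, ?_, ?_, ?_⟩
  · rw [hx, hx, e2, hd, hd, hc, hc, neg_neg]
  · rw [hydef, hydef, e2, hs, hs, neg_neg]
  · have hcc : cn (β * (t - 1)) = -cn (β * t) := by rw [hc1 t, neg_neg]
    have h := hdc (β * t)
    rw [hx, hx, ← hd1, hcc]
    calc _ = ((p + q) ^ 2 * (dn (β * t) ^ 2 - k ^ 2 * cn (β * t) ^ 2)) ^ 2 / 16 := by ring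
      _ = a * b := by rw [h, hk4, hpa, hqb]; ring
  · have hlin : ∀ s : ℝ, HasDerivAt (fun s => β * s) β s := fun s => by
      simpa using (hasDerivAt_id s).const_mul β
    have hX : ∀ s, HasDerivAt (fun s => (p + q) ^ 2 / 4 / β *
        (2 * A (β * s) + 2 * k * sn (β * s) - (1 - k ^ 2) * (β * s))) (x s) s := fun s => by
      refine ((((((hA (β * s)).comp s (hlin s)).const_mul 2).add
        (((hsn (β * s)).comp s (hlin s)).const_mul (2 * k))).sub
        ((hlin s).const_mul (1 - k ^ 2))).const_mul ((p + q) ^ 2 / 4 / β)).congr_deriv ?_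
      rw [hx, ← hdc (β * s)]
      field_simp
      ring
    have hxc : Continuous x := by
      have h1 : Continuous dn := continuous_iff_continuousAt.2 fun t => (hdn t).continuousAt
      have h2 : Continuous cn := continuous_iff_continuousAt.2 fun t => (hcn t).continuousAt
      rw [funext hx]
      fun_prop
    rw [intervalIntegral.integral_eq_sub_of_hasDerivAt (fun s _ => hX s)
      (hxc.intervalIntegrable _ _), hydef, hA1 t,
      show sn (β * (t - 1)) = -sn (β * t) by rw [hs1 t, neg_neg]]
    have hαe : α = k * (p + q) ^ 2 / β := by rw [← hαβ]; field_simp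
    have hse : Real.sqrt (2 / r) = (p + q) / β := by rw [← hβs]; field_simp
    rw [hse] at hcond2
    have hcalc : k * (p + q) ^ 2 / β * sn (β * t) =
        (p + q) ^ 2 / β * ellipticE k + k * (p + q) ^ 2 / β * sn (β * t)
          - (p + q) ^ 2 * (1 - k ^ 2) / 4 - ((p + q) * ((p + q) / β) * ellipticE k - p * q) := by
      rw [hk4]; ring
    rw [hcond2] at hcalc
    rw [hαe]
    refine hcalc.trans ?_
    field_simp
    ring
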